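/- For every n ≥ 1 and every ε ∈ Q_n there exist two trees min(ε), max(ε) ∈ Y_n such that the fiber of φ_n over ε is the weak order interval φ_n^{-1}(ε) = {t ∈ Y_n : min(ε) ≤ t ≤ max(ε)}. -/

import Mathlib

/-- Planar binary trees: `leaf` is the tree `|` (no interior vertex) and
`node l r = l ∨ r` is the grafting of `l` and `r` (their roots are joined to a new
vertex, which becomes the root). -/
inductive PBTree : Type
  | leaf : PBTree
  | node : PBTree → PBTree → PBTree
deriving DecidableEq

/-- The number of interior vertices of a planar binary tree: `t ∈ Yₙ` iff `t.size = n`. -/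
def PBTree.size : PBTree → ℕ
  | .leaf => 0
  | .node l r => l.size + r.size + 1

/-- The weak order on planar binary trees, generated transitively by
(a) `u ≤ u' → v ≤ v' → u∨v ≤ u'∨v'` and (b) `(u∨v)∨w ≤ u∨(v∨w)`. -/
inductive TreeLe : PBTree → PBTree → Prop
  | refl (t : PBTree) : TreeLe t t
  | graft {u u' v v' : PBTree} : TreeLe u u' → TreeLe v v' →
      TreeLe (.node u v) (.node u' v')
  | rotate (u v w : PBTree) : TreeLe (.node (.node u v) w) (.node u (.node v w))
  | trans {a b c : PBTree} : TreeLe a b → TreeLe b c → TreeLe a c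

/-- `phi t` is `φₙ(t) = (ε₁, …, ε_{n-1}) ∈ Qₙ = {±1}^{n-1}` for `t ∈ Yₙ`: the orientations
of the `n-1` interior leaves of `t` (all leaves except the two extreme ones), where
`εᵢ = -1` if the `i`-th interior leaf is right-oriented (SW–NE, a right child) and
`εᵢ = +1` if it is left-oriented (SE–NW, a left child).  Elements of `Qₙ` are modelled
as lists of integers of length `n-1` with entries `±1`. -/
def phi : PBTree → List ℤ
  | .leaf => []
  | .node .leaf .leaf => []
  | .node .leaf (.node c d) => 1 :: phi (.node c d)
  | .node (.node a b) .leaf => phi (.node a b) ++ [-1]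
  | .node (.node a b) (.node c d) => phi (.node a b) ++ ([-1, 1] ++ phi (.node c d))

/-!
Record the orientations of all leaves but the leftmost one; for a tree with a vertex this is
`phi t` followed by `-1`. In the rotation `(u ∨ v) ∨ w ≤ u ∨ (v ∨ w)` only the first leaf of `v`
can change orientation, from `-1` to `1`, so `phi` is monotone for the entrywise order and its
fibers are order convex. It remains to see that a fiber has a greatest element. Reading the signs
from the right and starting from `|`, replace the tree `t` built so far by `| ∨ t` at each `1`, and
graft a new vertex on its first leaf at each `-1`. Pushing vertices to the right by rotations, one
sees that every tree lies below the tree built from its signs. Reflecting trees in a vertical line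
reverses the weak order, so it turns greatest elements into least ones.
-/

theorem forall₂_trans {α : Type*} {R : α → α → Prop} [IsTrans α R] {a b c : List α}
    (hab : List.Forall₂ R a b) (hbc : List.Forall₂ R b c) : List.Forall₂ R a c := by
  induction hab generalizing c with
  | nil => exact hbc
  | cons hxy _ ih =>
    cases hbc with
    | cons hyz hbc => exact .cons (_root_.trans hxy hyz) (ih hbc)

theorem forall₂_antisymm {α : Type*} {R : α → α → Prop} [Std.Antisymm R] {a b : List α}
    (hab : List.Forall₂ R a b) (hba : List.Forall₂ R b a) : a = b := by
  induction hab with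
  | nil => rfl
  | cons hxy _ ih =>
    cases hba with
    | cons hyx hba => rw [antisymm hxy hyx, ih hba]

namespace PBTree

/-- The orientation, with the sign convention of `phi`, that the leftmost leaf of `t` acquires
when `t` is grafted as a right child. -/
def firstLeafSign : PBTree → ℤ
  | leaf => -1
  | node _ _ => 1

/-- The orientations of all leaves of `t` except the leftmost one, from left to right. Unlike in
`phi`, the rightmost leaf is recorded, which makes the recursion uniform. -/
def leafSigns : PBTree → List ℤ
  | leaf => []
  | node l r => l.leafSigns ++ r.firstLeafSign :: r.leafSigns

theorem firstLeafSign_le_one (t : PBTree) : t.firstLeafSign ≤ 1 := by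
  cases t <;> simp [firstLeafSign]

theorem firstLeafSign_of_size_pos {t : PBTree} (ht : 0 < t.size) : t.firstLeafSign = 1 := by
  cases t with
  | leaf => simp [size] at ht
  | node l r => rfl

theorem length_leafSigns (t : PBTree) : t.leafSigns.length = t.size := by
  induction t with
  | leaf => rfl
  | node l r ihl ihr =>
    simp only [leafSigns, size, List.length_append, List.length_cons, ihl, ihr]
    omega

theorem leafSigns_eq_phi_append {t : PBTree} (ht : 0 < t.size) : t.leafSigns = phi t ++ [-1] := by
  fun_induction phi t <;> simp_all [leafSigns, firstLeafSign, size]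

theorem phi_eq_dropLast_leafSigns (t : PBTree) : phi t = t.leafSigns.dropLast := by
  cases t with
  | leaf => rfl
  | node l r => rw [leafSigns_eq_phi_append (by simp [size]), List.dropLast_concat]

theorem firstLeafSign_eq_of_treeLe {s t : PBTree} (h : TreeLe s t) :
    s.firstLeafSign = t.firstLeafSign := by
  induction h with
  | refl | graft | rotate => rfl
  | trans _ _ ih₁ ih₂ => exact ih₁.trans ih₂

theorem leafSigns_rotate_le (u v w : PBTree) :
    List.Forall₂ (· ≤ ·) (node (node u v) w).leafSigns (node u (node v w)).leafSigns := by
  simp only [leafSigns, List.append_assoc, List.cons_append]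
  exact List.rel_append (List.forall₂_refl _)
    (.cons v.firstLeafSign_le_one (List.forall₂_refl _))

theorem leafSigns_mono {s t : PBTree} (h : TreeLe s t) :
    List.Forall₂ (· ≤ ·) s.leafSigns t.leafSigns := by
  induction h with
  | refl t => exact List.forall₂_refl _
  | graft _ hv ihu ihv =>
    exact List.rel_append ihu (.cons (firstLeafSign_eq_of_treeLe hv).le ihv)
  | rotate u v w => exact leafSigns_rotate_le u v w
  | trans _ _ ih₁ ih₂ => exact forall₂_trans ih₁ ih₂

theorem phi_mono {s t : PBTree} (h : TreeLe s t) : List.Forall₂ (· ≤ ·) (phi s) (phi t) := by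
  have hsigns := leafSigns_mono h
  rw [phi_eq_dropLast_leafSigns, phi_eq_dropLast_leafSigns, List.dropLast_eq_take,
    List.dropLast_eq_take, hsigns.length_eq]
  exact List.forall₂_take _ hsigns

/-- The tree `s / t` of Loday and Ronco: the root of `s` is grafted on the leftmost leaf of `t`. -/
def overProd (s : PBTree) : PBTree → PBTree
  | leaf => s
  | node l r => node (s.overProd l) r

theorem leaf_overProd (t : PBTree) : leaf.overProd t = t := by
  induction t with
  | leaf => rfl
  | node l r ihl _ => rw [overProd, ihl]

theorem overProd_assoc (s t u : PBTree) :
    (s.overProd t).overProd u = s.overProd (t.overProd u) := by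
  induction u with
  | leaf => rfl
  | node l r ihl _ => rw [overProd, overProd, overProd, ihl]

theorem node_overProd (a b t : PBTree) :
    (node a b).overProd t = a.overProd ((node leaf b).overProd t) :=
  overProd_assoc a (node leaf b) t

theorem leafSigns_overProd (s t : PBTree) :
    (s.overProd t).leafSigns = s.leafSigns ++ t.leafSigns := by
  induction t with
  | leaf => simp only [overProd, leafSigns, List.append_nil]
  | node l r ihl _ => simp only [overProd, leafSigns, ihl, List.append_assoc]

theorem size_overProd (s t : PBTree) : (s.overProd t).size = s.size + t.size := by
  simp only [← length_leafSigns, leafSigns_overProd, List.length_append]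

theorem overProd_mono_right (s : PBTree) {t t' : PBTree} (h : TreeLe t t') :
    TreeLe (s.overProd t) (s.overProd t') := by
  induction h with
  | refl t => exact .refl _
  | graft _ hv ihu _ => exact .graft ihu hv
  | rotate u v w => exact .rotate _ _ _
  | trans _ _ ih₁ ih₂ => exact .trans ih₁ ih₂

theorem node_overProd_le (a b t : PBTree) :
    TreeLe ((node a b).overProd t) (node a (b.overProd t)) := by
  induction t with
  | leaf => exact .refl _
  | node l r ihl _ => exact .trans (.graft ihl (.refl r)) (.rotate a (b.overProd l) r)

/-- The greatest tree with given `leafSigns`. The values on lists that are not the `leafSigns` of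
any tree are irrelevant. -/
def maxOfLeafSigns : List ℤ → PBTree
  | [] => leaf
  | x :: e =>
    if x = 1 then node leaf (maxOfLeafSigns e) else (node leaf leaf).overProd (maxOfLeafSigns e)

theorem size_maxOfLeafSigns (e : List ℤ) : (maxOfLeafSigns e).size = e.length := by
  induction e with
  | nil => rfl
  | cons x e ih =>
    rw [maxOfLeafSigns]
    split_ifs <;> simp [size_overProd, size, ih, add_comm]

theorem leafSigns_maxOfLeafSigns {ε : List ℤ} (hε : ∀ x ∈ ε, x = -1 ∨ x = 1) :
    (maxOfLeafSigns (ε ++ [-1])).leafSigns = ε ++ [-1] := by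
  induction ε with
  | nil => rfl
  | cons x ε ih =>
    obtain ⟨rfl | rfl, htail⟩ := List.forall_mem_cons.mp hε
    · simp [maxOfLeafSigns, leafSigns_overProd, ih htail, leafSigns, firstLeafSign]
    · have hfirst : (maxOfLeafSigns (ε ++ [-1])).firstLeafSign = 1 :=
        firstLeafSign_of_size_pos (by simp [size_maxOfLeafSigns])
      simp [maxOfLeafSigns, leafSigns, hfirst, ih htail]

theorem overProd_le_maxOfLeafSigns (s : PBTree) {t : PBTree} {e : List ℤ}
    (ht : TreeLe t (maxOfLeafSigns e)) :
    TreeLe (s.overProd t) (maxOfLeafSigns (s.leafSigns ++ e)) := by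
  induction s generalizing t e with
  | leaf => rwa [leaf_overProd]
  | node a b iha ihb =>
    rw [node_overProd, leafSigns, List.append_assoc]
    apply iha
    cases b with
    | leaf => exact overProd_mono_right _ ht
    | node c d => exact (node_overProd_le leaf (node c d) t).trans (.graft (.refl leaf) (ihb ht))

theorem le_maxOfLeafSigns (t : PBTree) : TreeLe t (maxOfLeafSigns t.leafSigns) := by
  simpa only [overProd, List.append_nil] using
    overProd_le_maxOfLeafSigns t (e := []) (.refl leaf)

/-- The tree `max(ε)`, the greatest one in the fiber of `phi` over `ε`. -/
def maxTree (ε : List ℤ) : PBTree :=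
  maxOfLeafSigns (ε ++ [-1])

theorem size_maxTree (ε : List ℤ) : (maxTree ε).size = ε.length + 1 := by
  simp [maxTree, size_maxOfLeafSigns]

theorem phi_maxTree {ε : List ℤ} (hε : ∀ x ∈ ε, x = -1 ∨ x = 1) : phi (maxTree ε) = ε := by
  rw [phi_eq_dropLast_leafSigns, maxTree, leafSigns_maxOfLeafSigns hε, List.dropLast_concat]

theorem le_maxTree_phi {t : PBTree} (ht : 0 < t.size) : TreeLe t (maxTree (phi t)) := by
  rw [maxTree, ← leafSigns_eq_phi_append ht]
  exact le_maxOfLeafSigns t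

/-- The reflection of a tree in a vertical line. -/
def mirror : PBTree → PBTree
  | leaf => leaf
  | node l r => node r.mirror l.mirror

/-- The action on the signs of leaves that corresponds to `mirror`. -/
def mirrorSigns (ε : List ℤ) : List ℤ :=
  (ε.map Neg.neg).reverse

theorem mirror_mirror (t : PBTree) : t.mirror.mirror = t := by
  induction t with
  | leaf => rfl
  | node l r ihl ihr => rw [mirror, mirror, ihl, ihr]

theorem size_mirror (t : PBTree) : t.mirror.size = t.size := by
  induction t with
  | leaf => rfl
  | node l r ihl ihr => rw [mirror, size, size, ihl, ihr, add_comm r.size]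

theorem mirror_le_mirror {s t : PBTree} (h : TreeLe s t) : TreeLe t.mirror s.mirror := by
  induction h with
  | refl t => exact .refl _
  | graft _ _ ihu ihv => exact .graft ihv ihu
  | rotate u v w => exact .rotate _ _ _
  | trans _ _ ih₁ ih₂ => exact .trans ih₂ ih₁

theorem mirrorSigns_mirrorSigns (ε : List ℤ) : mirrorSigns (mirrorSigns ε) = ε := by
  simp [mirrorSigns]

theorem length_mirrorSigns (ε : List ℤ) : (mirrorSigns ε).length = ε.length := by
  simp [mirrorSigns]

theorem sign_of_mem_mirrorSigns {ε : List ℤ} (hε : ∀ x ∈ ε, x = -1 ∨ x = 1) :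
    ∀ x ∈ mirrorSigns ε, x = -1 ∨ x = 1 := by
  intro x hx
  obtain ⟨y, hy, rfl⟩ : ∃ y ∈ ε, -y = x := by simpa [mirrorSigns] using hx
  rcases hε y hy with rfl | rfl <;> simp

theorem phi_mirror (t : PBTree) : phi t.mirror = mirrorSigns (phi t) := by
  fun_induction phi t <;> simp_all [mirror, phi, mirrorSigns]

/-- The tree `min(ε)`, the least one in the fiber of `phi` over `ε`. -/
def minTree (ε : List ℤ) : PBTree :=
  (maxTree (mirrorSigns ε)).mirror

theorem size_minTree (ε : List ℤ) : (minTree ε).size = ε.length + 1 := by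
  rw [minTree, size_mirror, size_maxTree, length_mirrorSigns]

theorem phi_minTree {ε : List ℤ} (hε : ∀ x ∈ ε, x = -1 ∨ x = 1) : phi (minTree ε) = ε := by
  rw [minTree, phi_mirror, phi_maxTree (sign_of_mem_mirrorSigns hε), mirrorSigns_mirrorSigns]

theorem minTree_phi_le {t : PBTree} (ht : 0 < t.size) : TreeLe (minTree (phi t)) t := by
  have hmirror : TreeLe t.mirror (maxTree (phi t.mirror)) := le_maxTree_phi (by rwa [size_mirror])
  rw [phi_mirror] at hmirror
  simpa only [minTree, mirror_mirror] using mirror_le_mirror hmirror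

end PBTree

/-- Proposition 3.5: for every `n ≥ 1` and every `ε ∈ Qₙ` (a list of
`n-1` signs `±1`) there exist trees `min(ε), max(ε) ∈ Yₙ` such that the fiber of
`φₙ : Yₙ → Qₙ` over `ε` is the weak order interval
`φₙ⁻¹(ε) = {t ∈ Yₙ : min(ε) ≤ t ≤ max(ε)}`. -/
theorem stmt17 (n : ℕ) (hn : 1 ≤ n) (ε : List ℤ) (hlen : ε.length = n - 1)
    (hsign : ∀ x ∈ ε, x = -1 ∨ x = 1) :
    ∃ mn mx : PBTree, mn.size = n ∧ mx.size = n ∧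
      ∀ t : PBTree, t.size = n → (phi t = ε ↔ (TreeLe mn t ∧ TreeLe t mx)) := by
  refine ⟨.minTree ε, .maxTree ε, ?_, ?_, fun t ht => ⟨?_, ?_⟩⟩
  · rw [PBTree.size_minTree, hlen, Nat.sub_add_cancel hn]
  · rw [PBTree.size_maxTree, hlen, Nat.sub_add_cancel hn]
  · rintro rfl
    have hpos : 0 < t.size := ht ▸ hn
    exact ⟨PBTree.minTree_phi_le hpos, PBTree.le_maxTree_phi hpos⟩
  · rintro ⟨hmin, hmax⟩
    have lower := PBTree.phi_mono hmin
    have upper := PBTree.phi_mono hmax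
    rw [PBTree.phi_minTree hsign] at lower
    rw [PBTree.phi_maxTree hsign] at upper
    exact forall₂_antisymm upper lower
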